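/- Finite-horizon approximation: define w(T, x) = inf_{φ ∈ D_0^{1,2}(1,T)} A_{x,[1,T]}(φ) for T ∈ (1, ∞) and w_∞(x) = inf_{φ ∈ D_0^{1,2}(1,+∞)} A_x(φ). Then for every sequence (T_n) ⊂ (1, ∞) with T_n → +∞, the functions w(T_n, ·) converge to w_∞ uniformly on every compact subset of Ω. -/

import Mathlib

open MeasureTheory Real Set Filter Topology
open scoped RealInnerProductSpace ENNReal

noncomputable section
namespace NBodyHJ

attribute [local instance] Classical.propDecidable

abbrev Conf (d N : ℕ) := Fin N → EuclideanSpace ℝ (Fin d)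

variable {d N : ℕ}

/-- The mass inner product on the configuration space. -/
def minner (m : Fin N → ℝ) (x y : Conf d N) : ℝ := ∑ i, m i * ⟪x i, y i⟫

/-- The mass norm on the configuration space. -/
def mnorm (m : Fin N → ℝ) (x : Conf d N) : ℝ := Real.sqrt (minner m x x)

/-- Membership in the zero-barycenter configuration space `X`. -/
def inX (m : Fin N → ℝ) (x : Conf d N) : Prop := ∑ i, m i • x i = 0

/-- Collision configurations. -/
def collision (x : Conf d N) : Prop := ∃ i j, i ≠ j ∧ x i = x j

/-- Membership in the collision-free zero-barycenter space `Ω`. -/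
def inOmega (m : Fin N → ℝ) (x : Conf d N) : Prop := inX m x ∧ ¬ collision x

/-- The Newtonian potential (with junk value `0` for a colliding pair). -/
def U (m : Fin N → ℝ) (x : Conf d N) : ℝ :=
  ∑ i : Fin N, ∑ j : Fin N, if i < j then m i * m j / ‖x i - x j‖ else 0

/-- The time interval `(t₀, T)`, where `T ∈ (t₀, +∞]` is extended-real. -/
def timeSet (t0 : ℝ) (T : EReal) : Set ℝ := {t : ℝ | t0 < t ∧ (t : EReal) < T}

/-- Membership of the pair (curve, derivative) `(φ, φ')` in `D₀^{1,2}(t₀, T)`: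
`φ` starts at `0`, takes values in `X`, is the integral of `φ'` (hence locally
absolutely continuous), and `φ'` has finite `L²` mass norm on `(t₀, T)`. -/
def InD (m : Fin N → ℝ) (t0 : ℝ) (T : EReal) (φ φ' : ℝ → Conf d N) : Prop :=
  φ t0 = 0 ∧
  (∀ t : ℝ, t0 ≤ t → (t : EReal) < T → inX m (φ t)) ∧
  (∀ t : ℝ, t0 ≤ t → (t : EReal) < T → φ t = ∫ s in Set.Ioc t0 t, φ' s) ∧
  (∀ t : ℝ, t0 ≤ t → (t : EReal) < T → IntegrableOn φ' (Set.Ioc t0 t)) ∧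
  IntegrableOn (fun t => (mnorm m (φ' t)) ^ 2) (timeSet t0 T)

/-- The norm `‖φ‖_{D_T}`. -/
def Dnorm (m : Fin N → ℝ) (t0 : ℝ) (T : EReal) (φ' : ℝ → Conf d N) : ℝ :=
  Real.sqrt (∫ t in timeSet t0 T, (mnorm m (φ' t)) ^ 2)

/-- The motion `γ(t) = φ(t) + t a + x - a` associated with `φ` in the hyperbolic case. -/
def hypCurve (a x : Conf d N) (φ : ℝ → Conf d N) (t : ℝ) : Conf d N :=
  φ t + t • a + x - a

/-- The integrand of the hyperbolic renormalized Lagrangian action. -/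
def hypIntegrand (m : Fin N → ℝ) (a x : Conf d N) (φ φ' : ℝ → Conf d N) (t : ℝ) : ℝ :=
  (mnorm m (φ' t)) ^ 2 / 2 + U m (hypCurve a x φ t) - U m (t • a)

/-- The hyperbolic renormalized Lagrangian action `A_{x,[1,T]}(φ)`, with values in
`ℝ ∪ {+∞}` : it equals the integral of the renormalized Lagrangian if this integrand is
integrable and the motion is a.e. collision-free, and `+∞` otherwise. -/
def hypAction (m : Fin N → ℝ) (a x : Conf d N) (T : EReal) (φ φ' : ℝ → Conf d N) : EReal :=
  if IntegrableOn (hypIntegrand m a x φ φ') (timeSet 1 T) ∧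
      (∀ᵐ t ∂volume.restrict (timeSet 1 T), ¬ collision (hypCurve a x φ t))
  then ((∫ t in timeSet 1 T, hypIntegrand m a x φ φ' t : ℝ) : EReal)
  else (⊤ : EReal)

/-- The infimum of the hyperbolic renormalized action over `D₀^{1,2}(1,T)`. -/
def hypInf (m : Fin N → ℝ) (a x : Conf d N) (T : EReal) : EReal :=
  ⨅ (φ : ℝ → Conf d N) (φ' : ℝ → Conf d N) (_ : InD m 1 T φ φ'), hypAction m a x T φ φ'

/-- The renormalized value function `v(x)` in the hyperbolic case. -/
def hypValue (m : Fin N → ℝ) (a x : Conf d N) : ℝ :=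
  (hypInf m a x ⊤).toReal - minner m a x

/-- The total weight of the pairs in the Newtonian potential. -/
def pairMass (m : Fin N → ℝ) : ℝ := ∑ i : Fin N, ∑ j : Fin N, if i < j then m i * m j else 0

lemma pairMass_nonneg {m : Fin N → ℝ} (hm : ∀ i, 0 < m i) : 0 ≤ pairMass m := by
  refine Finset.sum_nonneg fun i _ => Finset.sum_nonneg fun j _ => ?_
  split_ifs
  · exact (mul_pos (hm i) (hm j)).le
  · exact le_rfl

lemma minner_self_nonneg {m : Fin N → ℝ} (hm : ∀ i, 0 < m i) (v : Conf d N) :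
    0 ≤ minner m v v :=
  Finset.sum_nonneg fun i _ => mul_nonneg (hm i).le real_inner_self_nonneg

lemma mnorm_sq {m : Fin N → ℝ} (hm : ∀ i, 0 < m i) (v : Conf d N) :
    mnorm m v ^ 2 = minner m v v :=
  Real.sq_sqrt (minner_self_nonneg hm v)

lemma exists_norm_le_mnorm {m : Fin N → ℝ} (hm : ∀ i, 0 < m i) :
    ∃ κ : ℝ, 0 < κ ∧ ∀ v : Conf d N, ‖v‖ ≤ κ * mnorm m v := by
  have hs : 0 ≤ ∑ i, 1 / m i := Finset.sum_nonneg fun i _ => (one_div_pos.2 (hm i)).le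
  refine ⟨√(∑ i, 1 / m i) + 1, by positivity, fun v => ?_⟩
  have h0 : 0 ≤ mnorm m v := Real.sqrt_nonneg _
  refine (pi_norm_le_iff_of_nonneg (by positivity)).2 fun i => ?_
  have h1 : m i * ‖v i‖ ^ 2 ≤ mnorm m v ^ 2 := by
    rw [mnorm_sq hm, minner, ← real_inner_self_eq_norm_sq]
    exact Finset.single_le_sum (f := fun i => m i * ⟪v i, v i⟫)
      (fun i _ => mul_nonneg (hm i).le real_inner_self_nonneg) (Finset.mem_univ i)
  have h2 : 1 / m i ≤ ∑ i, 1 / m i :=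
    Finset.single_le_sum (f := fun i => 1 / m i) (fun i _ => (one_div_pos.2 (hm i)).le)
      (Finset.mem_univ i)
  have h3 : ‖v i‖ ^ 2 ≤ (√(∑ i, 1 / m i) * mnorm m v) ^ 2 := by
    rw [mul_pow, Real.sq_sqrt hs]
    calc ‖v i‖ ^ 2 = 1 / m i * (m i * ‖v i‖ ^ 2) := by field_simp [(hm i).ne']
      _ ≤ (∑ i, 1 / m i) * mnorm m v ^ 2 := by
        gcongr
        exact mul_nonneg (hm i).le (sq_nonneg _)
  have h4 := le_of_sq_le_sq h3 (by positivity)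
  nlinarith

lemma norm_sub_apply_le (v : Conf d N) (i j : Fin N) : ‖v i - v j‖ ≤ 2 * ‖v‖ := by
  have := norm_sub_le (v i) (v j)
  have := norm_le_pi_norm v i
  have := norm_le_pi_norm v j
  linarith

lemma exists_pos_forall_of_antitone {ι : Type*} [Finite ι] {P : ι → ℝ → Prop}
    (hP : ∀ i, Antitone (P i)) (h : ∀ i, ∃ δ, 0 < δ ∧ P i δ) : ∃ δ, 0 < δ ∧ ∀ i, P i δ := by
  have hev : ∀ᶠ δ in 𝓝[>] (0 : ℝ), ∀ i, P i δ := by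
    refine eventually_all.2 fun i => ?_
    obtain ⟨δ, hδ, hi⟩ := h i
    filter_upwards [Ioo_mem_nhdsGT hδ] with ε hε using hP i hε.2.le hi
  obtain ⟨δ, h1, h2⟩ := (hev.and self_mem_nhdsWithin).exists
  exact ⟨δ, h2, h1⟩

lemma exists_separation {a : Conf d N} (ha : ¬ collision a) :
    ∃ α : ℝ, 0 < α ∧ ∀ i j, i ≠ j → α ≤ ‖a i - a j‖ := by
  obtain ⟨α, hα, h⟩ := exists_pos_forall_of_antitone
    (P := fun (p : Fin N × Fin N) δ => p.1 ≠ p.2 → δ ≤ ‖a p.1 - a p.2‖)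
    (fun p ε δ hεδ h hp => hεδ.trans (h hp)) fun p => by
      by_cases hp : p.1 = p.2
      · exact ⟨1, one_pos, fun h => absurd hp h⟩
      · exact ⟨_, norm_pos_iff.2 (sub_ne_zero.2 fun h => ha ⟨_, _, hp, h⟩), fun _ => le_rfl⟩
  exact ⟨α, hα, fun i j hij => h (i, j) hij⟩

lemma rpow_neg_three_halves {t : ℝ} (ht : 0 < t) : t ^ (-(3 / 2) : ℝ) = √t / (t * t) := by
  have h : t * t = t ^ (2 : ℝ) := by norm_cast; ring
  rw [Real.sqrt_eq_rpow, h, ← Real.rpow_sub ht]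
  norm_num

lemma norm_pair_smul_sub {a y : Conf d N} {t β : ℝ} (ht : 0 ≤ t)
    (hy : ‖y - t • a‖ ≤ β * √t) (i j : Fin N) :
    |‖y i - y j‖ - t * ‖a i - a j‖| ≤ 2 * β * √t := by
  have h1 : t * ‖a i - a j‖ = ‖t • (a i - a j)‖ := by
    rw [norm_smul, Real.norm_of_nonneg ht]
  have h2 := norm_sub_apply_le (y - t • a) i j
  have h3 : (y - t • a) i - (y - t • a) j = (y i - y j) - t • (a i - a j) := by
    simp only [Pi.sub_apply, Pi.smul_apply, smul_sub]; abel
  rw [h3] at h2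
  rw [h1]
  have := abs_norm_sub_norm_le (y i - y j) (t • (a i - a j))
  linarith

lemma norm_pair_smul {a : Conf d N} {t : ℝ} (ht : 0 ≤ t) (i j : Fin N) :
    ‖(t • a) i - (t • a) j‖ = t * ‖a i - a j‖ := by
  rw [Pi.smul_apply, Pi.smul_apply, ← smul_sub, norm_smul, Real.norm_of_nonneg ht]

/-- Lower bound for the renormalized potential along a curve close to `t ↦ t a`. -/
lemma neg_le_U_sub {m : Fin N → ℝ} (hm : ∀ i, 0 < m i) {a y : Conf d N} {α : ℝ} (hα : 0 < α)
    (hsep : ∀ i j, i ≠ j → α ≤ ‖a i - a j‖) (hyc : ¬ collision y) {t β : ℝ} (ht : 0 < t)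
    (hβ : 0 ≤ β) (hy : ‖y - t • a‖ ≤ β * √t) :
    -(pairMass m * (2 / α ^ 2) * β * t ^ (-(3 / 2) : ℝ)) ≤ U m y - U m (t • a) := by
  rw [rpow_neg_three_halves ht, pairMass, U, U, ← Finset.sum_sub_distrib, Finset.sum_mul,
    Finset.sum_mul, Finset.sum_mul, ← Finset.sum_neg_distrib]
  refine Finset.sum_le_sum fun i _ => ?_
  rw [← Finset.sum_sub_distrib, Finset.sum_mul, Finset.sum_mul, Finset.sum_mul,
    ← Finset.sum_neg_distrib]
  refine Finset.sum_le_sum fun j _ => ?_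
  split_ifs with hij
  · have hpos := norm_pos_iff.2 (sub_ne_zero.2 fun h => hyc ⟨i, j, hij.ne, h⟩)
    have hA := hsep i j hij.ne
    have habs := (abs_le.1 (norm_pair_smul_sub ht.le hy i j)).2
    rw [norm_pair_smul ht.le]
    set u := ‖y i - y j‖
    set A := t * ‖a i - a j‖ with hAdef
    have hAα : α * t ≤ A := by rw [hAdef, mul_comm]; gcongr
    have hA0 : 0 < A := lt_of_lt_of_le (by positivity) hAα
    have key : -(2 * β * √t / (α * t) ^ 2) ≤ 1 / u - 1 / A := by
      rcases le_total u A with h | h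
      · have : 1 / A ≤ 1 / u := one_div_le_one_div_of_le hpos h
        have : 0 ≤ 2 * β * √t / (α * t) ^ 2 := by positivity
        linarith
      · have e : 1 / u - 1 / A = -((u - A) / (u * A)) := by field_simp; ring
        rw [e]
        apply neg_le_neg
        have hu : (α * t) ^ 2 ≤ u * A := by
          rw [sq]; gcongr; exact hAα.trans h
        gcongr
    have hmm := mul_pos (hm i) (hm j)
    calc -(m i * m j * (2 / α ^ 2) * β * (√t / (t * t)))
        = m i * m j * -(2 * β * √t / (α * t) ^ 2) := by field_simp
      _ ≤ m i * m j * (1 / u - 1 / A) := by gcongr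
      _ = m i * m j / u - m i * m j / A := by ring
  · simp

/-- Two-sided bound for the renormalized potential along an expanding curve. -/
lemma abs_U_sub_le {m : Fin N → ℝ} (hm : ∀ i, 0 < m i) {a y : Conf d N} {α δ : ℝ} (hα : 0 < α)
    (hsep : ∀ i j, i ≠ j → α ≤ ‖a i - a j‖) (hδ : 0 < δ) {t β : ℝ} (ht : 0 < t)
    (hβ : 0 ≤ β) (hy : ‖y - t • a‖ ≤ β * √t) (hyδ : ∀ i j, i ≠ j → δ * t ≤ ‖y i - y j‖) :
    |U m y - U m (t • a)| ≤ pairMass m * (2 / (δ * α)) * β * t ^ (-(3 / 2) : ℝ) := by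
  rw [rpow_neg_three_halves ht, pairMass, U, U, ← Finset.sum_sub_distrib, Finset.sum_mul,
    Finset.sum_mul, Finset.sum_mul]
  refine (Finset.abs_sum_le_sum_abs _ _).trans (Finset.sum_le_sum fun i _ => ?_)
  rw [← Finset.sum_sub_distrib, Finset.sum_mul, Finset.sum_mul, Finset.sum_mul]
  refine (Finset.abs_sum_le_sum_abs _ _).trans (Finset.sum_le_sum fun j _ => ?_)
  split_ifs with hij
  · have hA := hsep i j hij.ne
    have hu := hyδ i j hij.ne
    have habs := norm_pair_smul_sub ht.le hy i j
    rw [norm_pair_smul ht.le]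
    set u := ‖y i - y j‖
    set A := t * ‖a i - a j‖ with hAdef
    have hAα : α * t ≤ A := by rw [hAdef, mul_comm]; gcongr
    have hA0 : 0 < A := lt_of_lt_of_le (by positivity) hAα
    have hu0 : 0 < u := lt_of_lt_of_le (by positivity) hu
    have hmm := mul_pos (hm i) (hm j)
    have e : m i * m j / u - m i * m j / A = m i * m j * ((A - u) / (u * A)) := by
      field_simp
    rw [e, abs_mul, abs_of_pos hmm, abs_div, abs_of_pos (mul_pos hu0 hA0), abs_sub_comm]
    calc m i * m j * (|u - A| / (u * A))
        ≤ m i * m j * (2 * β * √t / ((δ * t) * (α * t))) := by gcongr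
      _ = m i * m j * (2 / (δ * α)) * β * (√t / (t * t)) := by field_simp
  · simp

lemma measurable_U (m : Fin N → ℝ) : Measurable (U m : Conf d N → ℝ) := by
  unfold U
  refine Finset.measurable_sum _ fun i _ => Finset.measurable_sum _ fun j _ => ?_
  split_ifs
  · exact measurable_const.div (((measurable_pi_apply i).sub (measurable_pi_apply j)).norm)
  · exact measurable_const

lemma timeSet_top : timeSet 1 ⊤ = Ioi 1 := by
  ext t; simp [timeSet]

lemma timeSet_coe (T : ℝ) : timeSet 1 (T : EReal) = Ioo 1 T := by
  ext t; simp [timeSet]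

lemma measurableSet_timeSet (t0 : ℝ) (T : EReal) : MeasurableSet (timeSet t0 T) :=
  (measurableSet_Ioi (a := t0)).inter (measurable_coe_real_ereal measurableSet_Iio)

lemma integral_rpow_neg_three_halves {T : ℝ} (hT : 0 < T) :
    ∫ t in Ioi T, t ^ (-(3 / 2) : ℝ) = 2 / √T := by
  rw [integral_Ioi_rpow_of_lt (by norm_num) hT, Real.sqrt_eq_rpow,
    show (-(3 / 2) : ℝ) + 1 = -(1 / 2) by norm_num, Real.rpow_neg hT.le]
  field_simp

lemma integrableOn_rpow_neg_three_halves {T : ℝ} (hT : 0 < T) :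
    IntegrableOn (fun t : ℝ => t ^ (-(3 / 2) : ℝ)) (Ioi T) :=
  integrableOn_Ioi_rpow_of_lt (by norm_num) hT

/-- Curves of finite renormalized action. -/
def Admissible (m : Fin N → ℝ) (a x : Conf d N) (T : EReal) (φ φ' : ℝ → Conf d N) : Prop :=
  InD m 1 T φ φ' ∧ IntegrableOn (hypIntegrand m a x φ φ') (timeSet 1 T) ∧
    ∀ᵐ t ∂volume.restrict (timeSet 1 T), ¬ collision (hypCurve a x φ t)

lemma hypInf_le {m : Fin N → ℝ} {a x : Conf d N} {T : EReal} {φ φ' : ℝ → Conf d N}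
    (h : Admissible m a x T φ φ') :
    hypInf m a x T ≤ ((∫ t in timeSet 1 T, hypIntegrand m a x φ φ' t : ℝ) : EReal) := by
  rw [hypInf]
  refine iInf_le_of_le φ (iInf_le_of_le φ' (iInf_le_of_le h.1 ?_))
  rw [hypAction, if_pos h.2]

lemma exists_admissible_of_hypInf_lt {m : Fin N → ℝ} {a x : Conf d N} {T : EReal} {r : ℝ}
    (h : hypInf m a x T < r) :
    ∃ φ φ', Admissible m a x T φ φ' ∧ ∫ t in timeSet 1 T, hypIntegrand m a x φ φ' t < r := by
  simp only [hypInf, iInf_lt_iff] at h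
  obtain ⟨φ, φ', hD, h⟩ := h
  rw [hypAction] at h
  split_ifs at h with hc
  · exact ⟨φ, φ', ⟨hD, hc⟩, EReal.coe_lt_coe_iff.1 h⟩
  · exact absurd h not_top_lt

lemma le_hypInf {m : Fin N → ℝ} {a x : Conf d N} {T : EReal} {c : ℝ}
    (h : ∀ φ φ', Admissible m a x T φ φ' → c ≤ ∫ t in timeSet 1 T, hypIntegrand m a x φ φ' t) :
    (c : EReal) ≤ hypInf m a x T := by
  refine EReal.le_of_forall_lt_iff_le.1 fun r hr => ?_
  obtain ⟨φ, φ', hA, hlt⟩ := exists_admissible_of_hypInf_lt hr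
  exact EReal.coe_le_coe_iff.2 ((h φ φ' hA).trans hlt.le)

lemma hypCurve_sub_smul (a x : Conf d N) (φ : ℝ → Conf d N) (t : ℝ) :
    hypCurve a x φ t - t • a = φ t + (x - a) := by
  rw [hypCurve]; abel

lemma InD.norm_le {m : Fin N → ℝ} {T : EReal} {φ φ' : ℝ → Conf d N} (h : InD m 1 T φ φ')
    {κ : ℝ} (hκ : 0 < κ) (hκm : ∀ v : Conf d N, ‖v‖ ≤ κ * mnorm m v) {η : ℝ} (hη : 0 < η)
    {t : ℝ} (ht : 1 ≤ t) (htT : (t : EReal) < T) :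
    ‖φ t‖ ≤ κ * (η * (∫ s in timeSet 1 T, mnorm m (φ' s) ^ 2) + 1 / η) * √t := by
  obtain ⟨-, -, hint, -, hL2⟩ := h
  have hsub : Ioc 1 t ⊆ timeSet 1 T := fun s hs =>
    ⟨hs.1, lt_of_le_of_lt (EReal.coe_le_coe_iff.2 hs.2) htT⟩
  have hst : 0 < √t := Real.sqrt_pos.2 (by linarith)
  have hL2t := hL2.mono_set hsub
  have hcst : IntegrableOn (fun _ : ℝ => 1 / (η * √t)) (Ioc 1 t) :=
    integrableOn_const (by simp)
  have hbd : ∀ s, ‖φ' s‖ ≤ κ * (η * √t * mnorm m (φ' s) ^ 2 + 1 / (η * √t)) := fun s => by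
    refine (hκm _).trans (mul_le_mul_of_nonneg_left ?_ hκ.le)
    have h0 : 0 ≤ mnorm m (φ' s) := Real.sqrt_nonneg _
    have e : η * √t * mnorm m (φ' s) ^ 2 + 1 / (η * √t) - 2 * mnorm m (φ' s)
        = (η * √t * mnorm m (φ' s) - 1) ^ 2 / (η * √t) := by
      field_simp; ring
    have : 0 ≤ (η * √t * mnorm m (φ' s) - 1) ^ 2 / (η * √t) := by positivity
    linarith
  rw [hint t ht htT]
  refine (norm_integral_le_of_norm_le (((hL2t.const_mul (η * √t)).add hcst).const_mul κ)
    (Eventually.of_forall hbd)).trans ?_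
  rw [integral_const_mul]
  simp only [Pi.add_apply]
  rw [integral_add (hL2t.const_mul (η * √t)) hcst, integral_const_mul, setIntegral_const,
    mul_assoc κ]
  have h1 : ∫ s in Ioc 1 t, mnorm m (φ' s) ^ 2 ≤ ∫ s in timeSet 1 T, mnorm m (φ' s) ^ 2 :=
    setIntegral_mono_set hL2 (Eventually.of_forall fun s => sq_nonneg _) hsub.eventuallyLE
  have h2 : volume.real (Ioc 1 t) • (1 / (η * √t)) ≤ 1 / η * √t := by
    rw [Real.volume_real_Ioc_of_le ht, smul_eq_mul]
    have : (t - 1) ≤ √t * √t := by rw [Real.mul_self_sqrt (by linarith)]; linarith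
    calc (t - 1) * (1 / (η * √t)) ≤ (√t * √t) * (1 / (η * √t)) := by gcongr
      _ = 1 / η * √t := by field_simp
  refine mul_le_mul_of_nonneg_left ?_ hκ.le
  calc _ ≤ η * √t * (∫ s in timeSet 1 T, mnorm m (φ' s) ^ 2) + 1 / η * √t := by gcongr
    _ = _ := by ring

lemma Admissible.ae_le_hypIntegrand {m : Fin N → ℝ} (hm : ∀ i, 0 < m i) {a x : Conf d N} {α : ℝ}
    (hα : 0 < α) (hsep : ∀ i j, i ≠ j → α ≤ ‖a i - a j‖) {T : EReal} {φ φ' : ℝ → Conf d N}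
    (h : Admissible m a x T φ φ') {β : ℝ} (hβ : 0 ≤ β)
    (hφ : ∀ t : ℝ, 1 ≤ t → (t : EReal) < T → ‖φ t + (x - a)‖ ≤ β * √t) :
    ∀ᵐ t ∂volume.restrict (timeSet 1 T),
      mnorm m (φ' t) ^ 2 / 2 - pairMass m * (2 / α ^ 2) * β * t ^ (-(3 / 2) : ℝ)
        ≤ hypIntegrand m a x φ φ' t := by
  filter_upwards [h.2.2, ae_restrict_mem (measurableSet_timeSet 1 T)] with t hc ht
  have ht0 : (0 : ℝ) < t := one_pos.trans ht.1
  have := neg_le_U_sub hm hα hsep hc ht0 hβ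
    ((hypCurve_sub_smul a x φ t).symm ▸ hφ t ht.1.le ht.2)
  rw [hypIntegrand]
  linarith

lemma exists_coercive {m : Fin N → ℝ} (hm : ∀ i, 0 < m i) {a : Conf d N} (ha : ¬ collision a)
    {b : ℝ} (hb : 0 ≤ b) :
    ∃ C : ℝ, ∀ x : Conf d N, ‖x - a‖ ≤ b → ∀ (T : EReal) (φ φ' : ℝ → Conf d N),
      Admissible m a x T φ φ' →
      (∫ t in timeSet 1 T, mnorm m (φ' t) ^ 2) / 4 - C
        ≤ ∫ t in timeSet 1 T, hypIntegrand m a x φ φ' t := by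
  obtain ⟨α, hα, hsep⟩ := exists_separation ha
  obtain ⟨κ, hκ, hκm⟩ := exists_norm_le_mnorm (d := d) hm
  have hP := pairMass_nonneg hm
  set C₀ := pairMass m * (2 / α ^ 2) with hC₀
  have hC0 : 0 ≤ C₀ := by positivity
  set η := 1 / (8 * (C₀ * κ + 1)) with hηdef
  have hη : 0 < η := by positivity
  refine ⟨2 * C₀ * (κ * (1 / η) + b), fun x hx T φ φ' hA => ?_⟩
  set E := ∫ t in timeSet 1 T, mnorm m (φ' t) ^ 2
  have hE : 0 ≤ E := integral_nonneg fun t => sq_nonneg _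
  set β := κ * (η * E + 1 / η) + b with hβdef
  have hβ : 0 ≤ β := by positivity
  have hφ : ∀ t : ℝ, 1 ≤ t → (t : EReal) < T → ‖φ t + (x - a)‖ ≤ β * √t := fun t ht htT => by
    have h1 := hA.1.norm_le hκ hκm hη ht htT
    have h2 : b ≤ b * √t := le_mul_of_one_le_right hb (Real.one_le_sqrt.2 ht)
    calc ‖φ t + (x - a)‖ ≤ ‖φ t‖ + ‖x - a‖ := norm_add_le _ _
      _ ≤ κ * (η * E + 1 / η) * √t + b * √t := by linarith
      _ = β * √t := by ring
  have hsub : timeSet 1 T ⊆ Ioi 1 := fun t ht => ht.1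
  have hr := integrableOn_rpow_neg_three_halves one_pos
  have hrT := (hr.mono_set hsub).const_mul (C₀ * β)
  have hL2 : IntegrableOn (fun t => mnorm m (φ' t) ^ 2 / 2) (timeSet 1 T) :=
    hA.1.2.2.2.2.div_const 2
  have h1 := setIntegral_mono_ae_restrict (hL2.sub hrT) hA.2.1
    (hA.ae_le_hypIntegrand hm hα hsep hβ hφ)
  simp only [Pi.sub_apply] at h1
  rw [integral_sub hL2 hrT, integral_div, integral_const_mul] at h1
  have h2 : ∫ t in timeSet 1 T, t ^ (-(3 / 2) : ℝ) ≤ 2 := by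
    refine (setIntegral_mono_set hr ?_ hsub.eventuallyLE).trans_eq ?_
    · filter_upwards [ae_restrict_mem measurableSet_Ioi] with t ht
      exact Real.rpow_nonneg (one_pos.trans ht).le _
    · rw [integral_rpow_neg_three_halves one_pos]; simp
  have h3 : C₀ * β * ∫ t in timeSet 1 T, t ^ (-(3 / 2) : ℝ) ≤ C₀ * β * 2 := by gcongr
  have h4 : 2 * C₀ * κ * η * E ≤ E / 4 := by
    have : 2 * C₀ * κ * η ≤ 1 / 4 := by
      rw [hηdef, mul_one_div, div_le_iff₀ (by positivity)]; nlinarith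
    nlinarith
  have h5 : C₀ * β * 2 = 2 * C₀ * κ * η * E + 2 * C₀ * (κ * (1 / η) + b) := by
    rw [hβdef]; ring
  linarith

lemma exists_growth_bound {m : Fin N → ℝ} (hm : ∀ i, 0 < m i) {a : Conf d N}
    (ha : ¬ collision a) {b : ℝ} (hb : 0 ≤ b) (M : ℝ) :
    ∃ β : ℝ, 0 ≤ β ∧ ∀ x : Conf d N, ‖x - a‖ ≤ b → ∀ (T : EReal) (φ φ' : ℝ → Conf d N),
      Admissible m a x T φ φ' → ∫ t in timeSet 1 T, hypIntegrand m a x φ φ' t ≤ M →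
      ∀ t : ℝ, 1 ≤ t → (t : EReal) < T → ‖φ t + (x - a)‖ ≤ β * √t := by
  obtain ⟨C, hC⟩ := exists_coercive hm ha hb
  obtain ⟨κ, hκ, hκm⟩ := exists_norm_le_mnorm (d := d) hm
  refine ⟨κ * (4 * |M + C| + 1) + b, by positivity, fun x hx T φ φ' hA hM t ht htT => ?_⟩
  have h0 := hC x hx T φ φ' hA
  have h1 := hA.1.norm_le hκ hκm one_pos ht htT
  set E := ∫ t in timeSet 1 T, mnorm m (φ' t) ^ 2
  have hE : 1 * E + 1 / 1 ≤ 4 * |M + C| + 1 := by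
    have := le_abs_self (M + C)
    linarith
  have h2 : b ≤ b * √t := le_mul_of_one_le_right hb (Real.one_le_sqrt.2 ht)
  calc ‖φ t + (x - a)‖ ≤ ‖φ t‖ + ‖x - a‖ := norm_add_le _ _
    _ ≤ κ * (1 * E + 1 / 1) * √t + b * √t := by linarith
    _ ≤ κ * (4 * |M + C| + 1) * √t + b * √t := by gcongr
    _ = _ := by ring

/-- Restricting a curve of finite action to a finite horizon. -/
lemma Admissible.restrict {m : Fin N → ℝ} (hm : ∀ i, 0 < m i) {a x : Conf d N} {α : ℝ}
    (hα : 0 < α) (hsep : ∀ i j, i ≠ j → α ≤ ‖a i - a j‖) {φ φ' : ℝ → Conf d N}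
    (h : Admissible m a x ⊤ φ φ') {β : ℝ} (hβ : 0 ≤ β)
    (hφ : ∀ t : ℝ, 1 ≤ t → ‖φ t + (x - a)‖ ≤ β * √t) {T : ℝ} (hT : 1 < T) :
    Admissible m a x T φ φ' ∧
      ∫ t in timeSet 1 T, hypIntegrand m a x φ φ' t ≤
        (∫ t in timeSet 1 ⊤, hypIntegrand m a x φ φ' t) +
          pairMass m * (2 / α ^ 2) * β * (2 / √T) := by
  have hsub : timeSet 1 T ⊆ timeSet 1 ⊤ := fun t ht => ⟨ht.1, EReal.coe_lt_top t⟩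
  have hI := h.2.1
  have hae := h.ae_le_hypIntegrand hm hα hsep hβ fun t ht _ => hφ t ht
  refine ⟨⟨⟨h.1.1, fun t ht _ => h.1.2.1 t ht (EReal.coe_lt_top t),
    fun t ht _ => h.1.2.2.1 t ht (EReal.coe_lt_top t),
    fun t ht _ => h.1.2.2.2.1 t ht (EReal.coe_lt_top t), h.1.2.2.2.2.mono_set hsub⟩,
    hI.mono_set hsub, ae_restrict_of_ae_restrict_of_subset hsub h.2.2⟩, ?_⟩
  have hTsub : Ici T ⊆ timeSet 1 ⊤ := fun t ht => ⟨hT.trans_le ht, EReal.coe_lt_top t⟩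
  have hunion : timeSet 1 ⊤ = timeSet 1 T ∪ Ici T := by
    rw [timeSet_top, timeSet_coe, Ioo_union_Ici_eq_Ioi hT]
  have hdisj : Disjoint (timeSet 1 T) (Ici T) := by
    rw [timeSet_coe]
    exact disjoint_left.2 fun t ht ht' => absurd ht.2 (not_lt.2 ht')
  rw [hunion, setIntegral_union hdisj measurableSet_Ici (hI.mono_set hsub) (hI.mono_set hTsub)]
  have hT0 : 0 < T := one_pos.trans hT
  have hr : IntegrableOn (fun t : ℝ =>
      -(pairMass m * (2 / α ^ 2) * β * t ^ (-(3 / 2) : ℝ))) (Ici T) := by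
    rw [integrableOn_Ici_iff_integrableOn_Ioi]
    exact ((integrableOn_rpow_neg_three_halves hT0).const_mul _).neg
  have h1 := setIntegral_mono_ae_restrict hr (hI.mono_set hTsub) (by
    filter_upwards [ae_restrict_of_ae_restrict_of_subset hTsub hae] with t ht
    have := sq_nonneg (mnorm m (φ' t))
    linarith)
  rw [integral_neg, integral_const_mul, integral_Ici_eq_integral_Ioi,
    integral_rpow_neg_three_halves hT0] at h1
  linarith

lemma InD.integrableOn_Ioo {m : Fin N → ℝ} (hm : ∀ i, 0 < m i) {T : ℝ} {φ φ' : ℝ → Conf d N}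
    (h : InD m 1 T φ φ') : IntegrableOn φ' (Ioo 1 T) := by
  obtain ⟨κ, hκ, hκm⟩ := exists_norm_le_mnorm (d := d) hm
  have hL2 := h.2.2.2.2
  rw [timeSet_coe] at hL2
  obtain ⟨u, -, huT, hu⟩ := exists_seq_strictMono_tendsto T
  have hU : Ioo 1 T = ⋃ n, Ioc 1 (u n) := by
    ext t
    simp only [mem_Ioo, mem_iUnion, mem_Ioc]
    constructor
    · rintro ⟨h1, h2⟩
      obtain ⟨n, hn⟩ := (hu.eventually (lt_mem_nhds h2)).exists
      exact ⟨n, h1, hn.le⟩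
    · rintro ⟨n, h1, h2⟩
      exact ⟨h1, h2.trans_lt (huT n)⟩
  have hmeas : AEStronglyMeasurable φ' (volume.restrict (Ioo 1 T)) := by
    rw [hU, aestronglyMeasurable_iUnion_iff]
    intro n
    rcases le_total 1 (u n) with h1 | h1
    · exact (h.2.2.2.1 (u n) h1 (EReal.coe_lt_coe_iff.2 (huT n))).aestronglyMeasurable
    · rw [Ioc_eq_empty (not_lt.2 h1), Measure.restrict_empty]
      exact aestronglyMeasurable_zero_measure _
  have hcst : IntegrableOn (fun _ : ℝ => (1 : ℝ)) (Ioo 1 T) := integrableOn_const (by simp)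
  refine ((hL2.add hcst).const_mul κ).mono' hmeas (Eventually.of_forall fun t => ?_)
  refine (hκm _).trans (mul_le_mul_of_nonneg_left ?_ hκ.le)
  simp only [Pi.add_apply]
  nlinarith [sq_nonneg (mnorm m (φ' t) - 1), sq_nonneg (mnorm m (φ' t))]

lemma isClosed_inX (m : Fin N → ℝ) : IsClosed {x : Conf d N | inX m x} := by
  unfold inX
  exact isClosed_eq (by fun_prop) continuous_const

lemma mnorm_zero (m : Fin N → ℝ) : mnorm m (0 : Conf d N) = 0 := by
  simp [mnorm, minner]

lemma not_collision_of_separation {y : Conf d N} {c : ℝ} (hc : 0 < c)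
    (h : ∀ i j, i ≠ j → c ≤ ‖y i - y j‖) : ¬ collision y := by
  rintro ⟨i, j, hij, he⟩
  have := h i j hij
  rw [he, sub_self, norm_zero] at this
  linarith

lemma separation_of_close {a y : Conf d N} {α β t : ℝ} (ht : 0 < t) {i j : Fin N}
    (hsep : α ≤ ‖a i - a j‖) (hy : ‖y - t • a‖ ≤ β * √t) (hβ : 4 * β ≤ α * √t) :
    α / 2 * t ≤ ‖y i - y j‖ := by
  have h1 := (abs_le.1 (norm_pair_smul_sub ht.le hy i j)).1
  have h2 : α * t ≤ t * ‖a i - a j‖ := by rw [mul_comm]; gcongr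
  have h4 : 4 * β * √t ≤ α * t := by
    calc 4 * β * √t ≤ α * √t * √t := by gcongr
      _ = α * t := by rw [mul_assoc, Real.mul_self_sqrt ht.le]
  linarith

/-- Prolonging a curve of finite action by a uniform motion with velocity `a`. -/
lemma Admissible.exists_extension {m : Fin N → ℝ} (hm : ∀ i, 0 < m i) {a x : Conf d N} {α : ℝ}
    (hα : 0 < α) (hsep : ∀ i j, i ≠ j → α ≤ ‖a i - a j‖) {T : ℝ} (hT : 1 < T)
    {φ φ' : ℝ → Conf d N} (h : Admissible m a x T φ φ') {β : ℝ} (hβ : 0 ≤ β)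
    (hφ : ∀ t : ℝ, 1 ≤ t → (t : EReal) < T → ‖φ t + (x - a)‖ ≤ β * √t)
    (hβT : 4 * β ≤ α * √T) :
    ∃ ψ ψ', Admissible m a x ⊤ ψ ψ' ∧
      ∫ t in timeSet 1 ⊤, hypIntegrand m a x ψ ψ' t ≤
        (∫ t in timeSet 1 T, hypIntegrand m a x φ φ' t) +
          pairMass m * (2 / (α / 2 * α)) * β * (2 / √T) := by
  have hT0 : 0 < T := one_pos.trans hT
  set ψ' : ℝ → Conf d N := (Ioo 1 T).indicator φ' with hψ'
  set ψ : ℝ → Conf d N := fun t => ∫ s in (1 : ℝ)..t, ψ' s with hψ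
  have hψ'int : Integrable ψ' := (integrable_indicator_iff measurableSet_Ioo).2
    (h.1.integrableOn_Ioo hm)
  have hψcont : Continuous ψ :=
    intervalIntegral.continuous_primitive (fun _ _ => hψ'int.intervalIntegrable) 1
  have hψIoc : ∀ t, 1 ≤ t → ψ t = ∫ s in Ioc 1 t, ψ' s := fun t ht =>
    intervalIntegral.integral_of_le ht
  have hψφ : ∀ t, 1 ≤ t → t < T → ψ t = φ t := fun t ht htT => by
    rw [hψIoc t ht, h.1.2.2.1 t ht (EReal.coe_lt_coe_iff.2 htT)]
    refine setIntegral_congr_fun measurableSet_Ioc fun s hs => ?_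
    exact indicator_of_mem (show s ∈ Ioo 1 T from ⟨hs.1, hs.2.trans_lt htT⟩) φ'
  have hψT : ∀ t, T ≤ t → ψ t = ψ T := fun t ht => by
    rw [hψ]
    have h0 : ∫ s in T..t, ψ' s = 0 := by
      rw [intervalIntegral.integral_of_le ht]
      refine setIntegral_eq_zero_of_forall_eq_zero fun s hs => ?_
      exact indicator_of_notMem (fun hs' => absurd hs'.2 (not_lt.2 hs.1.le)) φ'
    have := intervalIntegral.integral_add_adjacent_intervals
      (hψ'int.intervalIntegrable (a := 1) (b := T)) (hψ'int.intervalIntegrable (a := T) (b := t))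
    simp only [← this, h0, add_zero]
  have hev : ∀ᶠ t in 𝓝[<] T, 1 ≤ t ∧ t < T := by
    filter_upwards [Ioo_mem_nhdsLT hT] with t ht using ⟨ht.1.le, ht.2⟩
  have hlim : Tendsto ψ (𝓝[<] T) (𝓝 (ψ T)) := hψcont.continuousWithinAt
  have hXT : inX m (ψ T) := by
    refine (isClosed_inX m).mem_of_tendsto hlim ?_
    filter_upwards [hev] with t ht
    rw [hψφ t ht.1 ht.2]
    exact h.1.2.1 t ht.1 (EReal.coe_lt_coe_iff.2 ht.2)
  have hbT : ‖ψ T + (x - a)‖ ≤ β * √T := by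
    refine le_of_tendsto_of_tendsto (hlim.add_const (x - a)).norm
      (Real.continuous_sqrt.continuousWithinAt.const_mul β) ?_
    filter_upwards [hev] with t ht
    rw [hψφ t ht.1 ht.2]
    exact hφ t ht.1 (EReal.coe_lt_coe_iff.2 ht.2)
  have htail : ∀ t ∈ Ici T, ‖hypCurve a x ψ t - t • a‖ ≤ β * √t := fun t ht => by
    rw [hypCurve_sub_smul, hψT t ht]
    exact hbT.trans (mul_le_mul_of_nonneg_left (Real.sqrt_le_sqrt ht) hβ)
  have htailsep : ∀ t ∈ Ici T, ∀ i j, i ≠ j →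
      α / 2 * t ≤ ‖hypCurve a x ψ t i - hypCurve a x ψ t j‖ := fun t ht i j hij => by
    have ht0 : 0 < t := hT0.trans_le ht
    have h3 : 4 * β ≤ α * √t := hβT.trans (by gcongr; exact ht)
    exact separation_of_close ht0 (hsep i j hij) (htail t ht) h3
  set c := pairMass m * (2 / (α / 2 * α)) * β with hc
  have hψ'T : ∀ t ∈ Ici T, ψ' t = 0 := fun t ht =>
    indicator_of_notMem (fun h' => absurd h'.2 (not_lt.2 ht)) φ'
  have hbound : ∀ t ∈ Ici T, |hypIntegrand m a x ψ ψ' t| ≤ c * t ^ (-(3 / 2) : ℝ) := by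
    intro t ht
    have := abs_U_sub_le hm hα hsep (half_pos hα) (hT0.trans_le ht) hβ (htail t ht)
      (htailsep t ht)
    rw [hypIntegrand, hψ'T t ht, mnorm_zero]
    simpa using this
  have hr : IntegrableOn (fun t : ℝ => c * t ^ (-(3 / 2) : ℝ)) (Ici T) := by
    rw [integrableOn_Ici_iff_integrableOn_Ioi]
    exact (integrableOn_rpow_neg_three_halves hT0).const_mul _
  have hmeas : AEStronglyMeasurable (hypIntegrand m a x ψ ψ') (volume.restrict (Ici T)) := by
    have hcurve : Measurable (hypCurve a x ψ) := by
      have : Continuous (hypCurve a x ψ) := by unfold hypCurve; fun_prop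
      exact this.measurable
    have h1 : Measurable fun t : ℝ => U m (hypCurve a x ψ t) - U m (t • a) :=
      ((measurable_U m).comp hcurve).sub
        ((measurable_U m).comp (continuous_id.smul continuous_const).measurable)
    refine h1.aestronglyMeasurable.congr ?_
    filter_upwards [ae_restrict_mem measurableSet_Ici] with t ht
    rw [hypIntegrand, hψ'T t ht, mnorm_zero]
    simp
  have hItail : IntegrableOn (hypIntegrand m a x ψ ψ') (Ici T) :=
    hr.mono' hmeas (ae_restrict_of_forall_mem measurableSet_Ici hbound)
  have hcurve_eq : ∀ t ∈ timeSet 1 T, hypCurve a x ψ t = hypCurve a x φ t := fun t ht => by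
    rw [hypCurve, hypCurve, hψφ t ht.1.le (EReal.coe_lt_coe_iff.1 ht.2)]
  have hψ'eq : ∀ t ∈ timeSet 1 T, ψ' t = φ' t := fun t ht =>
    indicator_of_mem (timeSet_coe T ▸ ht) φ'
  have heq : EqOn (hypIntegrand m a x φ φ') (hypIntegrand m a x ψ ψ') (timeSet 1 T) :=
    fun t ht => by rw [hypIntegrand, hypIntegrand, hψ'eq t ht, hcurve_eq t ht]
  have hms := measurableSet_timeSet 1 (T : EReal)
  have hI0 : IntegrableOn (hypIntegrand m a x ψ ψ') (timeSet 1 T) := h.2.1.congr_fun heq hms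
  have hunion : timeSet 1 ⊤ = timeSet 1 T ∪ Ici T := by
    rw [timeSet_top, timeSet_coe, Ioo_union_Ici_eq_Ioi hT]
  have hdisj : Disjoint (timeSet 1 T) (Ici T) := by
    rw [timeSet_coe]
    exact disjoint_left.2 fun t ht ht' => absurd ht.2 (not_lt.2 ht')
  refine ⟨ψ, ψ', ⟨⟨intervalIntegral.integral_same, fun t ht _ => ?_, fun t ht _ => hψIoc t ht,
    fun t _ _ => hψ'int.integrableOn, ?_⟩, ?_, ?_⟩, ?_⟩
  · rcases lt_or_ge t T with htT | htT
    · rw [hψφ t ht htT]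
      exact h.1.2.1 t ht (EReal.coe_lt_coe_iff.2 htT)
    · rwa [hψT t htT]
  · rw [hunion]
    refine (h.1.2.2.2.2.congr_fun (fun t ht => ?_) hms).union
      (integrableOn_zero.congr_fun (fun t ht => ?_) measurableSet_Ici)
    · simp only [hψ'eq t ht]
    · simp only [hψ'T t ht, mnorm_zero]; norm_num
  · rw [hunion]
    exact hI0.union hItail
  · rw [hunion, ae_restrict_union_iff]
    constructor
    · filter_upwards [h.2.2, ae_restrict_mem hms] with t h1 ht
      rwa [hcurve_eq t ht]
    · refine ae_restrict_of_forall_mem measurableSet_Ici fun t ht => ?_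
      exact not_collision_of_separation (mul_pos (half_pos hα) (hT0.trans_le ht)) (htailsep t ht)
  · rw [hunion, setIntegral_union hdisj measurableSet_Ici hI0 hItail,
      setIntegral_congr_fun hms heq.symm]
    gcongr
    refine (setIntegral_mono_on hItail hr measurableSet_Ici
      fun t ht => (le_abs_self _).trans (hbound t ht)).trans_eq ?_
    rw [integral_const_mul, integral_Ici_eq_integral_Ioi, integral_rpow_neg_three_halves hT0]

lemma exists_forall_ne_line {ι : Type*} [Finite ι] (hd : 2 ≤ d)
    (p q : ι → EuclideanSpace ℝ (Fin d)) :
    ∃ w : EuclideanSpace ℝ (Fin d), ∀ i (τ : ℝ), w ≠ p i + τ • q i := by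
  have hnull : ∀ i, volume (AffineSubspace.mk' (p i) (Submodule.span ℝ {q i}) :
      Set (EuclideanSpace ℝ (Fin d))) = 0 := fun i => by
    refine Measure.addHaar_affineSubspace _ _ fun htop => ?_
    have h1 : Submodule.span ℝ {q i} = ⊤ := by
      rw [← AffineSubspace.direction_mk' (p i) (Submodule.span ℝ {q i}), htop,
        AffineSubspace.direction_top]
    have h2 := finrank_span_le_card (R := ℝ) ({q i} : Set (EuclideanSpace ℝ (Fin d)))
    rw [h1, finrank_top, finrank_euclideanSpace_fin] at h2
    simp at h2
    omega
  have hU := measure_iUnion_null hnull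
  have hne : (⋃ i, (AffineSubspace.mk' (p i) (Submodule.span ℝ {q i}) :
      Set (EuclideanSpace ℝ (Fin d)))) ≠ univ := by
    intro h
    rw [h] at hU
    exact isOpen_univ.measure_ne_zero volume univ_nonempty hU
  obtain ⟨w, hw⟩ := (ne_univ_iff_exists_notMem _).1 hne
  refine ⟨w, fun i τ h => hw (mem_iUnion.2 ⟨i, ?_⟩)⟩
  rw [SetLike.mem_coe, AffineSubspace.mem_mk', h, vsub_eq_sub, add_sub_cancel_left]
  exact Submodule.smul_mem _ _ (Submodule.mem_span_singleton_self _)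

/-- A configuration `c` such that one can move in a straight line from `x` to `x + c`, and then
in the direction `a` forever, without collision. -/
lemma exists_detour (hd : 2 ≤ d) {m : Fin N → ℝ} (hm : ∀ i, 0 < m i) {x : Conf d N}
    (hx : ¬ collision x) (a : Conf d N) :
    ∃ c : Conf d N, inX m c ∧ (∀ τ : ℝ, ¬ collision (x + τ • c)) ∧
      ∀ τ : ℝ, ¬ collision (x + c + τ • a) := by
  let k : Fin N → Fin N → ℝ := fun i j => (i : ℝ) - (j : ℝ)
  have hk : ∀ i j, i ≠ j → k i j ≠ 0 := fun i j hij h =>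
    hij (Fin.ext (by exact_mod_cast sub_eq_zero.1 h))
  obtain ⟨w, hw⟩ := exists_forall_ne_line (ι := (Fin N × Fin N) ⊕ (Fin N × Fin N)) hd
    (Sum.elim (fun _ => 0) fun p => -((k p.1 p.2)⁻¹ • (x p.1 - x p.2)))
    (Sum.elim (fun p => x p.1 - x p.2) fun p => a p.1 - a p.2)
  let g : EuclideanSpace ℝ (Fin d) := (∑ i, m i)⁻¹ • ∑ i, m i • (i : ℝ) • w
  have hc : ∀ i j : Fin N, ((i : ℝ) • w - g) - ((j : ℝ) • w - g) = k i j • w := fun i j => by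
    rw [sub_smul]; abel
  refine ⟨fun i => (i : ℝ) • w - g, ?_, fun τ => ?_, fun τ => ?_⟩
  · rw [inX]
    simp only [smul_sub, Finset.sum_sub_distrib, ← Finset.sum_smul]
    rcases isEmpty_or_nonempty (Fin N) with h | h
    · simp
    · have : 0 < ∑ i, m i := Finset.sum_pos (fun i _ => hm i) Finset.univ_nonempty
      rw [smul_inv_smul₀ this.ne', sub_self]
  · rintro ⟨i, j, hij, h⟩
    have h1 : (x i - x j) + (τ * k i j) • w = 0 := by
      rw [mul_smul, ← hc i j, smul_sub]
      simp only [Pi.add_apply, Pi.smul_apply] at h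
      rw [← sub_eq_zero] at h
      rw [← h]; abel
    by_cases hτ : τ = 0
    · rw [hτ, zero_mul, zero_smul, add_zero, sub_eq_zero] at h1
      exact hx ⟨i, j, hij, h1⟩
    · refine hw (Sum.inl (i, j)) (-(τ * k i j)⁻¹) ?_
      simp only [Sum.elim_inl, zero_add]
      rw [eq_neg_of_add_eq_zero_left h1, smul_neg, neg_smul, neg_neg,
        inv_smul_smul₀ (mul_ne_zero hτ (hk i j hij))]
  · rintro ⟨i, j, hij, h⟩
    have h1 : (x i - x j) + k i j • w + τ • (a i - a j) = 0 := by
      rw [← hc i j, smul_sub]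
      simp only [Pi.add_apply, Pi.smul_apply] at h
      rw [← sub_eq_zero] at h
      rw [← h]; abel
    refine hw (Sum.inr (i, j)) (-((k i j)⁻¹ * τ)) ?_
    simp only [Sum.elim_inr]
    have h2 : k i j • w = -(x i - x j) - τ • (a i - a j) := by
      rw [← sub_eq_zero, ← h1]; abel
    rw [← inv_smul_smul₀ (hk i j hij) w, h2, smul_sub, smul_neg, neg_smul, mul_smul, sub_eq_add_neg]

lemma exists_linear_separation {γ : ℝ → Conf d N} (hγ : Continuous γ)
    (hcol : ∀ t, 1 ≤ t → ¬ collision (γ t)) {a : Conf d N} (ha : ¬ collision a) {B : ℝ}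
    (hγB : ∀ t, 1 ≤ t → ‖γ t - t • a‖ ≤ B * √t) :
    ∃ δ : ℝ, 0 < δ ∧ ∀ t, 1 ≤ t → ∀ i j, i ≠ j → δ * t ≤ ‖γ t i - γ t j‖ := by
  obtain ⟨α, hα, hsep⟩ := exists_separation ha
  obtain ⟨δ, hδ, h⟩ := exists_pos_forall_of_antitone
    (P := fun (p : Fin N × Fin N) δ =>
      p.1 ≠ p.2 → ∀ t, 1 ≤ t → δ * t ≤ ‖γ t p.1 - γ t p.2‖)
    (fun p ε δ hεδ h hp t ht =>
      (mul_le_mul_of_nonneg_right hεδ (by linarith)).trans (h hp t ht)) fun p => by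
      by_cases hp : p.1 = p.2
      · exact ⟨1, one_pos, fun h => absurd hp h⟩
      set T := max 1 ((4 * B / α) ^ 2)
      have hcont : ContinuousOn (fun t : ℝ => ‖γ t p.1 - γ t p.2‖ / t) (Icc 1 T) := by
        refine ContinuousOn.div (by fun_prop) continuousOn_id fun t ht => ?_
        exact (one_pos.trans_le ht.1).ne'
      obtain ⟨s, hs, hmin⟩ := isCompact_Icc.exists_isMinOn
        (nonempty_Icc.2 (le_max_left _ _)) hcont
      have hs0 : 0 < s := one_pos.trans_le hs.1
      have hpos : 0 < ‖γ s p.1 - γ s p.2‖ / s :=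
        div_pos (norm_pos_iff.2 (sub_ne_zero.2 fun h => hcol s hs.1 ⟨_, _, hp, h⟩)) hs0
      refine ⟨min (α / 2) (‖γ s p.1 - γ s p.2‖ / s), lt_min (half_pos hα) hpos,
        fun _ t ht => ?_⟩
      have ht0 : 0 < t := one_pos.trans_le ht
      rcases le_total t T with htT | htT
      · refine (le_div_iff₀ ht0).1 ((min_le_right _ _).trans ?_)
        exact hmin ⟨ht, htT⟩
      · refine (mul_le_mul_of_nonneg_right (min_le_left _ _) ht0.le).trans ?_
        refine separation_of_close ht0 (hsep _ _ hp) (hγB t ht) ?_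
        have : 4 * B / α ≤ √t := Real.le_sqrt_of_sq_le ((le_max_right _ _).trans htT)
        rwa [div_le_iff₀' hα] at this
  exact ⟨δ, hδ, fun t ht i j hij => h (i, j) hij t ht⟩

lemma exists_local_upper_bound (hd : 2 ≤ d) {m : Fin N → ℝ} (hm : ∀ i, 0 < m i)
    {a : Conf d N} (ha : inOmega m a) {x₀ : Conf d N} (hx₀ : ¬ collision x₀) :
    ∃ r : ℝ, 0 < r ∧ ∃ M : ℝ, ∀ x ∈ Metric.ball x₀ r, hypInf m a x ⊤ ≤ (M : EReal) := by
  obtain ⟨c, hcX, hc1, hc2⟩ := exists_detour hd hm hx₀ a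
  obtain ⟨α, hα, hsep⟩ := exists_separation ha.2
  set q : Conf d N := c - a with hq
  set φ : ℝ → Conf d N := fun t => (min t 2 - 1) • q with hφdef
  set φ' : ℝ → Conf d N := (Ioc 1 2).indicator fun _ => q with hφ'def
  have hφcont : Continuous φ := by fun_prop
  have hφ'int : Integrable φ' :=
    (integrable_indicator_iff measurableSet_Ioc).2 (integrableOn_const (by simp))
  have hφle : ∀ t, 1 ≤ t → ‖φ t‖ ≤ ‖q‖ := fun t ht => by
    rw [hφdef, norm_smul, Real.norm_eq_abs]
    refine mul_le_of_le_one_left (norm_nonneg _) (abs_le.2 ⟨?_, ?_⟩)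
    · have := le_min ht one_le_two; linarith
    · have := min_le_right t 2; linarith
  have hclose : ∀ x t, 1 ≤ t → ‖hypCurve a x φ t - t • a‖ ≤ (‖q‖ + ‖x - a‖) * √t := by
    intro x t ht
    rw [hypCurve_sub_smul]
    refine (norm_add_le _ _).trans ((add_le_add_left (hφle t ht) _).trans ?_)
    exact le_mul_of_one_le_right (by positivity) (Real.one_le_sqrt.2 ht)
  have hcurve : ∀ x, Continuous (hypCurve a x φ) := fun x => by unfold hypCurve; fun_prop
  have hcol : ∀ t, 1 ≤ t → ¬ collision (hypCurve a x₀ φ t) := fun t ht => by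
    rcases le_total t 2 with h | h
    · have : hypCurve a x₀ φ t = x₀ + (t - 1) • c := by
        simp only [hypCurve, hφdef, min_eq_left h, hq]; module
      rw [this]; exact hc1 _
    · have : hypCurve a x₀ φ t = x₀ + c + (t - 2) • a := by
        simp only [hypCurve, hφdef, min_eq_right h, hq]; module
      rw [this]; exact hc2 _
  obtain ⟨δ, hδ, hδsep⟩ := exists_linear_separation (hcurve x₀) hcol ha.2 (hclose x₀)
  have hqX : inX m q := by
    have h1 := hcX
    have h2 := ha.1
    unfold inX at *
    simp only [hq, Pi.sub_apply, smul_sub, Finset.sum_sub_distrib, h1, h2, sub_zero]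
  have hL2 : IntegrableOn (fun t => mnorm m (φ' t) ^ 2) (timeSet 1 ⊤) := by
    have : (fun t => mnorm m (φ' t) ^ 2) = (Ioc 1 2).indicator fun _ => mnorm m q ^ 2 := by
      funext t
      by_cases ht : t ∈ Ioc (1 : ℝ) 2
      · simp only [hφ'def, indicator_of_mem ht]
      · simp only [hφ'def, indicator_of_notMem ht, mnorm_zero]; norm_num
    rw [this]
    exact ((integrable_indicator_iff measurableSet_Ioc).2
      (integrableOn_const (by simp))).integrableOn
  have hD : InD m 1 ⊤ φ φ' := by
    refine ⟨?_, fun t _ _ => ?_, fun t ht _ => ?_, fun t _ _ => hφ'int.integrableOn, hL2⟩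
    · simp only [hφdef, min_eq_left one_le_two, sub_self, zero_smul]
    · have h1 := hqX
      unfold inX at *
      simp only [hφdef, Pi.smul_apply, smul_comm (m _), ← Finset.smul_sum, h1, smul_zero]
    · rw [hφ'def, setIntegral_indicator measurableSet_Ioc, Ioc_inter_Ioc, setIntegral_const,
        max_self, Real.volume_real_Ioc_of_le (le_min ht one_le_two)]
  set B := ‖q‖ + ‖x₀ - a‖ + δ / 4 with hBdef
  have hB : 0 ≤ B := by positivity
  set D := pairMass m * (2 / (δ / 2 * α)) * B with hDdef
  have hr : IntegrableOn (fun t : ℝ => D * t ^ (-(3 / 2) : ℝ)) (timeSet 1 ⊤) := by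
    rw [timeSet_top]
    exact (integrableOn_rpow_neg_three_halves one_pos).const_mul D
  have hms := measurableSet_timeSet 1 (⊤ : EReal)
  refine ⟨δ / 4, by positivity,
    ∫ t in timeSet 1 ⊤, (mnorm m (φ' t) ^ 2 / 2 + D * t ^ (-(3 / 2) : ℝ)), fun x hx => ?_⟩
  have hxx : ‖x - x₀‖ < δ / 4 := by rwa [← dist_eq_norm]
  have hxsep : ∀ t ∈ timeSet 1 (⊤ : EReal), ∀ i j, i ≠ j →
      δ / 2 * t ≤ ‖hypCurve a x φ t i - hypCurve a x φ t j‖ := fun t ht i j hij => by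
    have h1 := hδsep t ht.1.le i j hij
    have h2 := norm_sub_apply_le (x - x₀) i j
    have h3 : hypCurve a x₀ φ t i - hypCurve a x₀ φ t j =
        (hypCurve a x φ t i - hypCurve a x φ t j) - ((x - x₀) i - (x - x₀) j) := by
      simp only [hypCurve, Pi.sub_apply, Pi.add_apply]; abel
    rw [h3] at h1
    have h4 := norm_sub_le (hypCurve a x φ t i - hypCurve a x φ t j) ((x - x₀) i - (x - x₀) j)
    have h5 := mul_le_mul_of_nonneg_left ht.1.le hδ.le
    linarith
  have hxclose : ∀ t ∈ timeSet 1 (⊤ : EReal), ‖hypCurve a x φ t - t • a‖ ≤ B * √t := by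
    intro t ht
    refine (hclose x t ht.1.le).trans (mul_le_mul_of_nonneg_right ?_ (Real.sqrt_nonneg t))
    have : ‖x - a‖ ≤ ‖x - x₀‖ + ‖x₀ - a‖ := norm_sub_le_norm_sub_add_norm_sub _ _ _
    linarith
  have hUb : ∀ t ∈ timeSet 1 (⊤ : EReal),
      |U m (hypCurve a x φ t) - U m (t • a)| ≤ D * t ^ (-(3 / 2) : ℝ) := fun t ht =>
    abs_U_sub_le hm hα hsep (half_pos hδ) (one_pos.trans ht.1) hB (hxclose t ht) (hxsep t ht)
  have hmeas : Measurable fun t : ℝ => U m (hypCurve a x φ t) - U m (t • a) :=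
    ((measurable_U m).comp (hcurve x).measurable).sub
      ((measurable_U m).comp (continuous_id.smul continuous_const).measurable)
  have hUint : IntegrableOn (fun t : ℝ => U m (hypCurve a x φ t) - U m (t • a)) (timeSet 1 ⊤) :=
    hr.mono' hmeas.aestronglyMeasurable (ae_restrict_of_forall_mem hms hUb)
  have hkin : IntegrableOn (fun t => mnorm m (φ' t) ^ 2 / 2) (timeSet 1 ⊤) := hL2.div_const 2
  have hI : IntegrableOn (hypIntegrand m a x φ φ') (timeSet 1 ⊤) :=
    (hkin.add hUint).congr_fun (fun t _ => by simp only [hypIntegrand, Pi.add_apply]; ring) hms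
  refine (hypInf_le ⟨hD, hI, ae_restrict_of_forall_mem hms fun t ht =>
    not_collision_of_separation (mul_pos (half_pos hδ) (one_pos.trans ht.1))
      (hxsep t ht)⟩).trans (EReal.coe_le_coe_iff.2 ?_)
  refine setIntegral_mono_on hI (hkin.add hr) hms fun t ht => ?_
  have := (le_abs_self _).trans (hUb t ht)
  simp only [hypIntegrand]
  linarith

lemma exists_upper_bound (hd : 2 ≤ d) {m : Fin N → ℝ} (hm : ∀ i, 0 < m i)
    {a : Conf d N} (ha : inOmega m a) {K : Set (Conf d N)} (hK : IsCompact K)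
    (hKΩ : ∀ x ∈ K, inOmega m x) :
    ∃ M : ℝ, ∀ x ∈ K, hypInf m a x ⊤ ≤ (M : EReal) := by
  refine hK.induction_on (p := fun S => ∃ M : ℝ, ∀ x ∈ S, hypInf m a x ⊤ ≤ (M : EReal))
    ⟨0, by simp⟩ (fun S S' hSS' ⟨M, hM⟩ => ⟨M, fun x hx => hM x (hSS' hx)⟩) ?_ fun x hx => ?_
  · rintro S S' ⟨M, hM⟩ ⟨M', hM'⟩
    refine ⟨max M M', fun x hx => ?_⟩
    rcases hx with hx | hx
    · exact (hM x hx).trans (EReal.coe_le_coe_iff.2 (le_max_left _ _))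
    · exact (hM' x hx).trans (EReal.coe_le_coe_iff.2 (le_max_right _ _))
  · obtain ⟨r, hr, M, hM⟩ := exists_local_upper_bound hd hm ha (hKΩ x hx).2
    exact ⟨Metric.ball x r, mem_nhdsWithin_of_mem_nhds (Metric.ball_mem_nhds x hr), M, hM⟩

lemma hypInf_ne_bot {m : Fin N → ℝ} (hm : ∀ i, 0 < m i) {a : Conf d N} (ha : ¬ collision a)
    (x : Conf d N) (T : EReal) : hypInf m a x T ≠ ⊥ := by
  obtain ⟨C, hC⟩ := exists_coercive hm ha (norm_nonneg (x - a))
  have h : ((-C : ℝ) : EReal) ≤ hypInf m a x T := le_hypInf fun φ φ' hA => by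
    have h1 := hC x le_rfl T φ φ' hA
    have h2 : 0 ≤ ∫ t in timeSet 1 T, mnorm m (φ' t) ^ 2 := integral_nonneg fun t => sq_nonneg _
    linarith
  exact ((EReal.bot_lt_coe _).trans_le h).ne'

/-- Transfer of an almost-optimal comparison between actions to the infima. -/
lemma hypInf_le_add {m : Fin N → ℝ} {a x : Conf d N} {S T : EReal} {c M D : ℝ}
    (hc : hypInf m a x S = c) (hcM : c ≤ M)
    (h : ∀ φ φ', Admissible m a x S φ φ' →
      ∫ t in timeSet 1 S, hypIntegrand m a x φ φ' t ≤ M + 1 →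
      ∃ ψ ψ', Admissible m a x T ψ ψ' ∧ ∫ t in timeSet 1 T, hypIntegrand m a x ψ ψ' t ≤
        (∫ t in timeSet 1 S, hypIntegrand m a x φ φ' t) + D) :
    hypInf m a x T ≤ ((c + D : ℝ) : EReal) := by
  refine EReal.le_of_forall_lt_iff_le.1 fun r hr => ?_
  have hr' : 0 < r - (c + D) := sub_pos.2 (EReal.coe_lt_coe_iff.1 hr)
  set ε := min (r - (c + D)) 1
  have hε : 0 < ε := lt_min hr' one_pos
  have hε1 : ε ≤ 1 := min_le_right _ _
  have hεr : ε ≤ r - (c + D) := min_le_left _ _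
  obtain ⟨φ, φ', hA, hlt⟩ := exists_admissible_of_hypInf_lt (m := m) (a := a) (x := x) (T := S)
    (r := c + ε) (by rw [hc]; exact EReal.coe_lt_coe_iff.2 (by linarith))
  obtain ⟨ψ, ψ', hB, hle⟩ := h φ φ' hA (by linarith)
  exact (hypInf_le hB).trans (EReal.coe_le_coe_iff.2 (by linarith))

/-- **Finite-horizon approximation** : with `w(T,x) = inf_{φ ∈ D₀^{1,2}(1,T)} A_{x,[1,T]}(φ)`
and `w_∞(x) = inf_{φ ∈ D₀^{1,2}(1,+∞)} A_x(φ)`, for every sequence `T_n → +∞` in `(1,∞)`,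
`w(T_n, ·) → w_∞` uniformly on every compact subset of `Ω`. -/
theorem finite_horizon_approximation {d N : ℕ} (hd : 2 ≤ d) (hN : 2 ≤ N)
    (m : Fin N → ℝ) (hm : ∀ i, 0 < m i)
    (a : Conf d N) (ha : inOmega m a)
    (T : ℕ → ℝ) (hT1 : ∀ n, 1 < T n) (hTtop : Filter.Tendsto T Filter.atTop Filter.atTop)
    (K : Set (Conf d N)) (hKcpt : IsCompact K) (hKΩ : ∀ x ∈ K, inOmega m x) :
    TendstoUniformlyOn
      (fun n (x : Conf d N) => (hypInf m a x ((T n : ℝ) : EReal)).toReal)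
      (fun x : Conf d N => (hypInf m a x ⊤).toReal)
      Filter.atTop K := by
  obtain ⟨α, hα, hsep⟩ := exists_separation ha.2
  obtain ⟨M, hM⟩ := exists_upper_bound hd hm ha hKcpt hKΩ
  obtain ⟨b₀, hb₀⟩ := hKcpt.isBounded.exists_norm_le
  set b := |b₀| + ‖a‖ with hbdef
  have hb : ∀ x ∈ K, ‖x - a‖ ≤ b := fun x hx =>
    (norm_sub_le _ _).trans (by have := hb₀ x hx; have := le_abs_self b₀; linarith)
  have hb0 : 0 ≤ b := by positivity
  have hP := pairMass_nonneg hm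
  have htop : ∀ x ∈ K, hypInf m a x ⊤ = ((hypInf m a x ⊤).toReal : EReal) := fun x hx =>
    (EReal.coe_toReal ((hM x hx).trans_lt (EReal.coe_lt_top M)).ne
      (hypInf_ne_bot hm ha.2 x ⊤)).symm
  have htopM : ∀ x ∈ K, (hypInf m a x ⊤).toReal ≤ M := fun x hx =>
    EReal.coe_le_coe_iff.1 (htop x hx ▸ hM x hx)
  obtain ⟨β, hβ, hgrow⟩ := exists_growth_bound hm ha.2 hb0 (M + 1)
  set D := pairMass m * (2 / α ^ 2) * β * 2 with hD
  have hD0 : 0 ≤ D := by positivity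
  have hup : ∀ x ∈ K, ∀ S : ℝ, 1 < S →
      hypInf m a x S ≤ (((hypInf m a x ⊤).toReal + D / √S : ℝ) : EReal) := fun x hx S hS => by
    refine hypInf_le_add (htop x hx) (htopM x hx) fun φ φ' hA hle => ?_
    obtain ⟨h1, h2⟩ := hA.restrict hm hα hsep hβ
      (fun t ht => hgrow x (hb x hx) ⊤ φ φ' hA hle t ht (EReal.coe_lt_top t)) hS
    exact ⟨φ, φ', h1, h2.trans_eq (by rw [hD]; ring)⟩
  have hfin : ∀ x ∈ K, ∀ S : ℝ, 1 < S →
      hypInf m a x S = ((hypInf m a x S).toReal : EReal) := fun x hx S hS =>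
    (EReal.coe_toReal ((hup x hx S hS).trans_lt (EReal.coe_lt_top _)).ne
      (hypInf_ne_bot hm ha.2 x S)).symm
  have hupR : ∀ x ∈ K, ∀ S : ℝ, 1 < S →
      (hypInf m a x S).toReal ≤ (hypInf m a x ⊤).toReal + D / √S := fun x hx S hS =>
    EReal.coe_le_coe_iff.1 (hfin x hx S hS ▸ hup x hx S hS)
  have hfinM : ∀ x ∈ K, ∀ S : ℝ, 1 < S → (hypInf m a x S).toReal ≤ M + D := fun x hx S hS => by
    have h1 := hupR x hx S hS
    have h2 := htopM x hx
    have h3 : D / √S ≤ D := div_le_self hD0 (Real.one_le_sqrt.2 hS.le)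
    linarith
  obtain ⟨β', hβ', hgrow'⟩ := exists_growth_bound hm ha.2 hb0 (M + D + 1)
  set D' := pairMass m * (2 / (α / 2 * α)) * β' * 2 with hD'
  have hlow : ∀ x ∈ K, ∀ S : ℝ, 1 < S → 4 * β' ≤ α * √S →
      (hypInf m a x ⊤).toReal ≤ (hypInf m a x S).toReal + D' / √S := fun x hx S hS hSβ => by
    have h := hypInf_le_add (T := ⊤) (D := D' / √S) (hfin x hx S hS) (hfinM x hx S hS)
      fun φ φ' hA hle => by
        obtain ⟨ψ, ψ', h1, h2⟩ := hA.exists_extension hm hα hsep hS hβ'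
          (hgrow' x (hb x hx) S φ φ' hA hle) hSβ
        exact ⟨ψ, ψ', h1, h2.trans_eq (by rw [hD']; ring)⟩
    rw [htop x hx] at h
    exact EReal.coe_le_coe_iff.1 h
  rw [Metric.tendstoUniformlyOn_iff]
  intro ε hε
  have hsqrt : Tendsto (fun n => √(T n)) atTop atTop := Real.tendsto_sqrt_atTop.comp hTtop
  filter_upwards [hsqrt.eventually_ge_atTop (4 * β' / α),
    (hsqrt.const_div_atTop D).eventually (gt_mem_nhds hε),
    (hsqrt.const_div_atTop D').eventually (gt_mem_nhds hε)] with n h1 h2 h3 x hx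
  have h4 := hupR x hx (T n) (hT1 n)
  have h5 := hlow x hx (T n) (hT1 n) ((div_le_iff₀' hα).1 h1)
  rw [Real.dist_eq, abs_lt]
  constructor <;> linarith

end NBodyHJ
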